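/- arXiv:2506.21836 — 3 statements merged into one kernel-verified Lean document; each statement's English description precedes it below -/
import Mathlib

section
/- Characterization of the lexicographic excellence solution: Let X be a finite set with |X| ≥ 2. An SRS R : ℛ(𝔛) → ℛ(X) satisfies WIVIP, IWS, and SSI if and only if R = R^L. -/
/-!
Social ranking solutions (SRSs).  The set of individuals is a finite type `X`;
coalitions are elements of `Finset X` (so the domain of a power relation is the
whole power set `𝔛 = 2^X`).  A weak order `≿ ∈ ℛ(𝔛)` is encoded as a relation
`r : Finset X → Finset X → Prop` together with (when needed) its list of
equivalence classes `L = [Σ₁, …, Σ_l]` in strictly decreasing order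
(`IsClassList r L`).
-/

namespace SocialRanking

variable {X : Type*} [Fintype X] [DecidableEq X]

/-- A weak order: a reflexive, complete and transitive binary relation. -/
def IsWeakOrder {A : Type*} (r : A → A → Prop) : Prop :=
  Reflexive r ∧ (∀ a b, r a b ∨ r b a) ∧ Transitive r

/-- A social ranking solution maps every weak order on `2^X` to a weak order on `X`. -/
def IsSRS (R : (Finset X → Finset X → Prop) → X → X → Prop) : Prop :=
  ∀ r, IsWeakOrder r → IsWeakOrder (R r)

/-- `IsClassList r L` : `L = [Σ₁, …, Σ_l]` is the list of the equivalence classes of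
the weak order `r` on `2^X`, in strictly decreasing order (`≿ : Σ₁ ≻ ⋯ ≻ Σ_l`):
every class is nonempty, every coalition lies in exactly one class, and
`S ≿ T ↔ i ≤ j` whenever `S ∈ Σᵢ` and `T ∈ Σⱼ` (0-based indices). -/
def IsClassList (r : Finset X → Finset X → Prop) (L : List (Finset (Finset X))) : Prop :=
  (∀ C ∈ L, C.Nonempty) ∧
  (∀ S : Finset X, ∃! i : ℕ, i < L.length ∧ S ∈ L.getD i ∅) ∧
  (∀ i j : ℕ, i < L.length → j < L.length →
    ∀ S ∈ L.getD i ∅, ∀ T ∈ L.getD j ∅, (r S T ↔ i ≤ j))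

/-- The asymmetric (strict) part `P` of a relation. -/
def StrictPart {A : Type*} (p : A → A → Prop) (a b : A) : Prop := p a b ∧ ¬ p b a

/-- The symmetric part `I` (indifference) of a relation. -/
def IndiffPart {A : Type*} (p : A → A → Prop) (a b : A) : Prop := p a b ∧ p b a

/-- The restrictions of `p` and `q` to `{x, y}` coincide. -/
def AgreeOn (p q : X → X → Prop) (x y : X) : Prop :=
  ∀ a ∈ ({x, y} : Set X), ∀ b ∈ ({x, y} : Set X), (p a b ↔ q a b)

/-- `|Δ[x]|` : the number of coalitions in `Δ` containing `x`. -/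
def count (Δ : Finset (Finset X)) (x : X) : ℕ := (Δ.filter (fun S => x ∈ S)).card

/-! ### Independence axioms and further axioms -/

/-- WIVIP: for a dichotomous `≿ : Σ₁ ≻ Σ₂`, any `x ∈ ⋂Σ₁` is socially strictly above
any `y ∉ ⋂Σ₁`. -/
def WIVIP (R : (Finset X → Finset X → Prop) → X → X → Prop) : Prop :=
  ∀ (r : Finset X → Finset X → Prop) (C₁ C₂ : Finset (Finset X)),
    IsClassList r [C₁, C₂] →
    ∀ x y : X, (∀ S ∈ C₁, x ∈ S) → (∃ S ∈ C₁, y ∉ S) →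
    StrictPart (R r) x y

/-- IWS (independence from the worst set): if `≿ : Σ₁ ≻ ⋯ ≻ Σ_{l-1} ≻ Σ_l` (`l ≥ 2`)
and `≿'` is obtained from `≿` by partitioning the worst class `Σ_l` into ordered
classes `Γ₁ ≻' ⋯ ≻' Γ_{l'}`, then `x P_≿ y` implies `x P_≿' y`. -/
def IWS (R : (Finset X → Finset X → Prop) → X → X → Prop) : Prop :=
  ∀ (r r' : Finset X → Finset X → Prop) (L Γ : List (Finset (Finset X)))
    (W : Finset (Finset X)),
    L ≠ [] → IsClassList r (L ++ [W]) → IsClassList r' (L ++ Γ) →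
    ∀ x y : X, StrictPart (R r) x y → StrictPart (R r') x y

/-- IBS (independence from the best set): if `≿ : Σ₁ ≻ Σ₂ ≻ ⋯ ≻ Σ_l` (`l ≥ 2`)
and `≿'` is obtained from `≿` by partitioning the best class `Σ₁` into ordered
classes `Γ₁ ≻' ⋯ ≻' Γ_{l'}`, then `x P_≿ y` implies `x P_≿' y`. -/
def IBS (R : (Finset X → Finset X → Prop) → X → X → Prop) : Prop :=
  ∀ (r r' : Finset X → Finset X → Prop) (B : Finset (Finset X))
    (L Γ : List (Finset (Finset X))),
    L ≠ [] → IsClassList r (B :: L) → IsClassList r' (Γ ++ L) →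
    ∀ x y : X, StrictPart (R r) x y → StrictPart (R r') x y

/-- TO (tops-only): two weak orders with the same best equivalence class get the
same social ranking. -/
def TO (R : (Finset X → Finset X → Prop) → X → X → Prop) : Prop :=
  ∀ (r r' : Finset X → Finset X → Prop) (B : Finset (Finset X))
    (L L' : List (Finset (Finset X))),
    IsClassList r (B :: L) → IsClassList r' (B :: L') → R r = R r'

/-- The class list obtained from `L` by sliding `Δ` out of class `k₁` into class `k₂`
(`Σ_{k₁}` is replaced by `Σ_{k₁} \ Δ` and `Σ_{k₂}` by `Σ_{k₂} ∪ Δ`; if `Δ = Σ_{k₁}`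
the emptied class disappears). -/
def slide (L : List (Finset (Finset X))) (k₁ k₂ : ℕ) (Δ : Finset (Finset X)) :
    List (Finset (Finset X)) :=
  ((L.set k₁ ((L.getD k₁ ∅) \ Δ)).set k₂ ((L.getD k₂ ∅) ∪ Δ)).filter
    (fun C => decide (C ≠ ∅))

/-- SI (slide independence): sliding a proper subfamily `Δ ⊊ Σ_{k₁}` with
`|Δ[x]| = |Δ[y]|` into another class does not change the social ranking on `{x, y}`. -/
def SI (R : (Finset X → Finset X → Prop) → X → X → Prop) : Prop :=
  ∀ (r r' : Finset X → Finset X → Prop) (L : List (Finset (Finset X)))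
    (k₁ k₂ : ℕ) (x y : X) (Δ : Finset (Finset X)),
    IsClassList r L → k₁ < L.length → k₂ < L.length →
    Δ ⊂ L.getD k₁ ∅ → count Δ x = count Δ y →
    IsClassList r' (slide L k₁ k₂ Δ) →
    AgreeOn (R r) (R r') x y

/-- SSI (strong slide independence): as SI, but `Δ ⊆ Σ_{k₁}` may be the whole class
(in which case the class disappears). -/
def SSI (R : (Finset X → Finset X → Prop) → X → X → Prop) : Prop :=
  ∀ (r r' : Finset X → Finset X → Prop) (L : List (Finset (Finset X)))
    (k₁ k₂ : ℕ) (x y : X) (Δ : Finset (Finset X)),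
    IsClassList r L → k₁ < L.length → k₂ < L.length →
    Δ ⊆ L.getD k₁ ∅ → count Δ x = count Δ y →
    IsClassList r' (slide L k₁ k₂ Δ) →
    AgreeOn (R r) (R r') x y

/-- Top-SI: the condition of SI restricted to slides out of the best class (`k₁ = 1`,
i.e. index `0`). -/
def TopSI (R : (Finset X → Finset X → Prop) → X → X → Prop) : Prop :=
  ∀ (r r' : Finset X → Finset X → Prop) (L : List (Finset (Finset X)))
    (k₂ : ℕ) (x y : X) (Δ : Finset (Finset X)),
    IsClassList r L → 0 < L.length → k₂ < L.length →
    Δ ⊂ L.getD 0 ∅ → count Δ x = count Δ y →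
    IsClassList r' (slide L 0 k₂ Δ) →
    AgreeOn (R r) (R r') x y

/-- The class list of `≿' : Σ₁ ≻' ⋯ ≻' Σ_{k-1} ≻' Δ ≻' Σ_k \ Δ ≻' ⋯ ≻' Σ_l`
(empty classes disappear). -/
def inuiList (L : List (Finset (Finset X))) (k : ℕ) (Δ : Finset (Finset X)) :
    List (Finset (Finset X)) :=
  (L.take k ++ [Δ, (L.getD k ∅) \ Δ] ++ L.drop (k + 1)).filter
    (fun C => decide (C ≠ ∅))

/-- INUI (independence of non-unanimous improvements). -/
def INUI (R : (Finset X → Finset X → Prop) → X → X → Prop) : Prop :=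
  ∀ (r r' : Finset X → Finset X → Prop) (L : List (Finset (Finset X)))
    (k : ℕ) (Δ : Finset (Finset X)) (x y : X),
    IsClassList r L → k < L.length → Δ ⊆ L.getD k ∅ →
    (∃ S ∈ Δ, x ∉ S) → (∃ S ∈ Δ, y ∉ S) →
    IsClassList r' (inuiList L k Δ) →
    AgreeOn (R r) (R r') x y

/-- The weak order `≿_π := {(π(S), π(T)) : S ≿ T}` induced by a permutation `π` of `X`. -/
def permRel (π : Equiv.Perm X) (r : Finset X → Finset X → Prop) :
    Finset X → Finset X → Prop :=
  fun A B => r (A.image π.symm) (B.image π.symm)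

/-- NT (neutrality). -/
def NT (R : (Finset X → Finset X → Prop) → X → X → Prop) : Prop :=
  ∀ (π : Equiv.Perm X) (r : Finset X → Finset X → Prop), IsWeakOrder r →
    ∀ x y : X, (R (permRel π r) (π x) (π y) ↔ R r x y)

/-- IIC (independence of irrelevant coalitions). -/
def IIC (R : (Finset X → Finset X → Prop) → X → X → Prop) : Prop :=
  ∀ (r r' : Finset X → Finset X → Prop), IsWeakOrder r → IsWeakOrder r' →
    ∀ x y : X,
      (∀ S : Finset X, x ∉ S → y ∉ S →
        (r (insert x S) (insert y S) ↔ r' (insert x S) (insert y S))) →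
      (R r x y ↔ R r' x y)

/-! ### The social ranking solutions -/

/-- `θ_≿(x) = (|Σ₁[x]|, …, |Σ_l[x]|)`. -/
def theta (L : List (Finset (Finset X))) (x : X) : List ℕ := L.map (fun C => count C x)

/-- The lexicographic order `a ≥^L b` on vectors of naturals. -/
def GeLex (a b : List ℕ) : Prop :=
  a = b ∨ ∃ k < a.length, (∀ j < k, a.getD j 0 = b.getD j 0) ∧ b.getD k 0 < a.getD k 0

/-- The dual lexicographic order `a ≥^DL b` (read from the last coordinate;
fewer appearances in worse classes is better). -/
def GeDualLex (a b : List ℕ) : Prop :=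
  a = b ∨ ∃ k < a.length, (∀ j, k < j → a.getD j 0 = b.getD j 0) ∧ a.getD k 0 < b.getD k 0

/-- The lexicographic excellence solution `R^L` : `x R^L_≿ y ↔ θ_≿(x) ≥^L θ_≿(y)`. -/
def RL (r : Finset X → Finset X → Prop) (x y : X) : Prop :=
  ∀ L, IsClassList r L → GeLex (theta L x) (theta L y)

/-- The dual lexicographic excellence solution `R^DL`. -/
def RDL (r : Finset X → Finset X → Prop) (x y : X) : Prop :=
  ∀ L, IsClassList r L → GeDualLex (theta L x) (theta L y)

/-- Plurality `R^P` : `x R^P_≿ y ↔ |Σ₁[x]| ≥ |Σ₁[y]|`. -/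
def RP (r : Finset X → Finset X → Prop) (x y : X) : Prop :=
  ∀ L, IsClassList r L → count (L.getD 0 ∅) y ≤ count (L.getD 0 ∅) x

/-- `e_≿(x)` : the largest `k` such that `x` belongs to every coalition of each of the
first `k` equivalence classes (`0` if `x ∉ T₁`). -/
def eIIS (L : List (Finset (Finset X))) (x : X) : ℕ :=
  (L.takeWhile (fun C => decide (∀ S ∈ C, x ∈ S))).length

/-- The intersection initial segment rule `R^IIS` : `x R^IIS_≿ y ↔ e_≿(x) ≥ e_≿(y)`. -/
def RIIS (r : Finset X → Finset X → Prop) (x y : X) : Prop :=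
  ∀ L, IsClassList r L → eIIS L y ≤ eIIS L x

/-- The constant-`X` rule: everybody is ranked indifferent. -/
def RconstX : (Finset X → Finset X → Prop) → X → X → Prop := fun _ _ _ => True

/-- The split-plurality score `s^split_≿(z) = ∑_{S ∈ Σ₁ : z ∈ S} 1/|S|`. -/
def splitScore (C : Finset (Finset X)) (z : X) : ℚ :=
  ∑ S ∈ C.filter (fun S => z ∈ S), (1 : ℚ) / (S.card : ℚ)

/-- Split-plurality `R^splitP`. -/
def RsplitP (r : Finset X → Finset X → Prop) (x y : X) : Prop :=
  ∀ L, IsClassList r L → splitScore (L.getD 0 ∅) y ≤ splitScore (L.getD 0 ∅) x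

/-- Plurality with tie-breaking by a linear order `t = ▷` :
`x R^{P,▷}_≿ y ↔ (x P^P_≿ y ∨ (x I^P_≿ y ∧ x ▷ y))`. -/
def RPtie (t : X → X → Prop) (r : Finset X → Finset X → Prop) (x y : X) : Prop :=
  ∀ L, IsClassList r L →
    (count (L.getD 0 ∅) y < count (L.getD 0 ∅) x ∨
      (count (L.getD 0 ∅) x = count (L.getD 0 ∅) y ∧ t x y))


section Helpers

theorem icl_mk (r : Finset X → Finset X → Prop) (L : List (Finset (Finset X)))
    (h1 : ∀ C ∈ L, C.Nonempty) (h2 : ∀ S : Finset X, ∃ C ∈ L, S ∈ C)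
    (h3 : ∀ C ∈ L, ∀ S ∈ C, ∀ T ∈ C, r S T)
    (h4 : L.Pairwise (fun C D => ∀ S ∈ C, ∀ T ∈ D, r S T ∧ ¬ r T S)) :
    IsClassList r L := by
  have key : ∀ i j : ℕ, i < L.length → j < L.length →
    ∀ S ∈ L.getD i ∅, ∀ T ∈ L.getD j ∅, (r S T ↔ i ≤ j) := by
    intro i j hi hj S hS T hT
    rw [List.getD_eq_getElem _ _ hi] at hS
    rw [List.getD_eq_getElem _ _ hj] at hT
    rw [List.pairwise_iff_getElem] at h4
    rcases lt_trichotomy i j with h | h | h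
    · have := h4 i j hi hj h S hS T hT
      exact ⟨fun _ => h.le, fun _ => this.1⟩
    · subst h
      exact ⟨fun _ => le_rfl, fun _ => h3 _ (List.getElem_mem hi) S hS T hT⟩
    · have := h4 j i hj hi h T hT S hS
      exact ⟨fun h' => absurd h' this.2, fun h' => by omega⟩
  refine ⟨h1, ?_, key⟩
  intro S
  obtain ⟨C, hC, hS⟩ := h2 S
  obtain ⟨i, hi, rfl⟩ := List.getElem_of_mem hC
  have hS' : S ∈ L.getD i ∅ := by rwa [List.getD_eq_getElem _ _ hi]
  refine ⟨i, ⟨hi, hS'⟩, ?_⟩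
  rintro j ⟨hj, hjS⟩
  have hrr := (key i i hi hi S hS' S hS').2 le_rfl
  have a := (key i j hi hj S hS' S hjS).1 hrr
  have b := (key j i hj hi S hjS S hS').1 hrr
  omega

def IsPart (L : List (Finset (Finset X))) : Prop :=
  (∀ C ∈ L, C.Nonempty) ∧ (∀ S : Finset X, ∃ C ∈ L, S ∈ C) ∧ L.Pairwise Disjoint

theorem IsClassList.part {r : Finset X → Finset X → Prop} {L : List (Finset (Finset X))}
    (h : IsClassList r L) : IsPart L := by
  obtain ⟨h1, h2, h3⟩ := h
  refine ⟨h1, ?_, ?_⟩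
  · intro S
    obtain ⟨i, ⟨hi, hS⟩, -⟩ := h2 S
    rw [List.getD_eq_getElem _ _ hi] at hS
    exact ⟨_, List.getElem_mem hi, hS⟩
  · rw [List.pairwise_iff_getElem]
    intro i j hi hj hij
    rw [Finset.disjoint_left]
    intro S hS hS'
    have := (h2 S).unique ⟨hi, by rwa [List.getD_eq_getElem _ _ hi]⟩
      ⟨hj, by rwa [List.getD_eq_getElem _ _ hj]⟩
    omega

def relOf (L : List (Finset (Finset X))) (S T : Finset X) : Prop :=
  ∃ i j : ℕ, i < L.length ∧ j < L.length ∧ S ∈ L.getD i ∅ ∧ T ∈ L.getD j ∅ ∧ i ≤ j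

theorem IsPart.idx {L : List (Finset (Finset X))} (h : IsPart L) {S : Finset X} {i j : ℕ}
    (hi : i < L.length) (hj : j < L.length) (hS : S ∈ L.getD i ∅) (hS' : S ∈ L.getD j ∅) :
    i = j := by
  have h3 := h.2.2
  rw [List.getD_eq_getElem _ _ hi] at hS
  rw [List.getD_eq_getElem _ _ hj] at hS'
  rw [List.pairwise_iff_getElem] at h3
  rcases lt_trichotomy i j with h | h | h
  · exact absurd hS' (Finset.disjoint_left.1 (h3 i j hi hj h) hS)
  · exact h
  · exact absurd hS (Finset.disjoint_left.1 (h3 j i hj hi h) hS')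

theorem IsPart.icl {L : List (Finset (Finset X))} (h : IsPart L) : IsClassList (relOf L) L := by
  refine ⟨h.1, ?_, ?_⟩
  · intro S
    obtain ⟨C, hC, hS⟩ := h.2.1 S
    obtain ⟨i, hi, rfl⟩ := List.getElem_of_mem hC
    have hS' : S ∈ L.getD i ∅ := by rwa [List.getD_eq_getElem _ _ hi]
    exact ⟨i, ⟨hi, hS'⟩, fun j hj => h.idx hj.1 hi hj.2 hS'⟩
  · intro i j hi hj S hS T hT
    constructor
    · rintro ⟨i', j', hi', hj', hS', hT', hle⟩
      rw [h.idx hi hi' hS hS', h.idx hj hj' hT hT']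
      exact hle
    · intro hle
      exact ⟨i, j, hi, hj, hS, hT, hle⟩

theorem IsClassList.weak {r : Finset X → Finset X → Prop} {L : List (Finset (Finset X))}
    (h : IsClassList r L) : IsWeakOrder r := by
  obtain ⟨h1, h2, h3⟩ := h
  choose f hf hu using h2
  have key : ∀ S T, r S T ↔ f S ≤ f T := fun S T =>
    h3 _ _ (hf S).1 (hf T).1 S (hf S).2 T (hf T).2
  refine ⟨fun S => (key S S).2 le_rfl, fun S T => ?_, fun S T U a b => ?_⟩
  · rw [key, key]; exact le_total _ _
  · rw [key] at a b ⊢; exact a.trans b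

theorem icl_le {r : Finset X → Finset X → Prop} {L L' : List (Finset (Finset X))}
    (h : IsClassList r L) (h' : IsClassList r L') : ∀ (i j : ℕ) (S : Finset X),
    i < L.length → j < L'.length → S ∈ L.getD i ∅ → S ∈ L'.getD j ∅ → i ≤ j := by
  intro i
  induction i with
  | zero => intros; omega
  | succ k ih =>
    intro j S hi hj hS hS'
    have hk : k < L.length := by omega
    obtain ⟨T, hT⟩ := h.1 _ (List.getElem_mem hk)
    rw [← List.getD_eq_getElem _ ∅ hk] at hT
    obtain ⟨m, ⟨hm, hTm⟩, -⟩ := h'.2.1 T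
    have a := ih m T hk hm hT hTm
    have b : ¬ r S T := by
      rw [h.2.2 _ _ hi hk S hS T hT]; omega
    rw [h'.2.2 _ _ hj hm S hS' T hTm] at b
    omega

theorem icl_len {r : Finset X → Finset X → Prop} {L L' : List (Finset (Finset X))}
    (h : IsClassList r L) (h' : IsClassList r L') : L.length ≤ L'.length := by
  by_contra hlt
  push Not at hlt
  obtain ⟨T, hT⟩ := h.1 _ (List.getElem_mem hlt)
  rw [← List.getD_eq_getElem _ ∅ hlt] at hT
  obtain ⟨m, ⟨hm, hTm⟩, -⟩ := h'.2.1 T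
  have := icl_le h h' _ _ T hlt hm hT hTm
  omega

theorem icl_unique {r : Finset X → Finset X → Prop} {L L' : List (Finset (Finset X))}
    (h : IsClassList r L) (h' : IsClassList r L') : L = L' := by
  have hsub : ∀ {L L' : List (Finset (Finset X))}, IsClassList r L → IsClassList r L' →
      ∀ i, i < L.length → ∀ S ∈ L.getD i ∅, S ∈ L'.getD i ∅ := by
    intro L L' h h' i hi S hS
    obtain ⟨m, ⟨hm, hSm⟩, -⟩ := h'.2.1 S
    have a := icl_le h h' _ _ S hi hm hS hSm
    have b := icl_le h' h _ _ S hm hi hSm hS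
    obtain rfl : i = m := by omega
    exact hSm
  apply List.ext_getElem (le_antisymm (icl_len h h') (icl_len h' h))
  intro i hi hi'
  rw [← List.getD_eq_getElem _ ∅ hi, ← List.getD_eq_getElem _ ∅ hi']
  ext S
  exact ⟨hsub h h' i hi S, hsub h' h i hi' S⟩

theorem icl_exists {r : Finset X → Finset X → Prop} (h : IsWeakOrder r) :
    ∃ L, IsClassList r L := by
  classical
  obtain ⟨hr, hc, ht⟩ := h
  let f : Finset X → ℕ := fun S => (Finset.univ.filter (fun T => r T S ∧ ¬ r S T)).card
  have hle : ∀ S T, r S T → f S ≤ f T := by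
    intro S T hST
    apply Finset.card_le_card
    intro U
    simp only [Finset.mem_filter, Finset.mem_univ, true_and]
    rintro ⟨a, b⟩
    exact ⟨ht a hST, fun c => b (ht hST c)⟩
  have hlt : ∀ S T, ¬ r S T → f T < f S := by
    intro S T hST
    have hTS : r T S := (hc S T).resolve_left hST
    apply Finset.card_lt_card
    rw [Finset.ssubset_iff_of_subset]
    · refine ⟨T, ?_, ?_⟩
      · simp [hTS, hST]
      · simp
    · intro U
      simp only [Finset.mem_filter, Finset.mem_univ, true_and]
      rintro ⟨a, b⟩
      exact ⟨ht a hTS, fun c => b (ht hTS c)⟩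
  have key : ∀ S T, r S T ↔ f S ≤ f T := fun S T =>
    ⟨hle S T, fun h => by by_contra h'; have := hlt S T h'; omega⟩
  refine ⟨((List.range (Fintype.card (Finset X) + 1)).map
    (fun k => Finset.univ.filter (fun S => f S = k))).filter (fun C => decide (C ≠ ∅)), ?_⟩
  apply icl_mk
  · intro C hC
    rw [List.mem_filter] at hC
    exact Finset.nonempty_iff_ne_empty.2 (by simpa using hC.2)
  · intro S
    refine ⟨Finset.univ.filter (fun T => f T = f S), ?_, by simp⟩
    rw [List.mem_filter]
    constructor
    · rw [List.mem_map]
      refine ⟨f S, ?_, rfl⟩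
      rw [List.mem_range]
      exact Nat.lt_succ_of_le (Finset.card_le_univ _)
    · have : S ∈ Finset.univ.filter (fun T => f T = f S) := by simp
      simpa using Finset.ne_empty_of_mem this
  · intro C hC S hS T hT
    rw [List.mem_filter, List.mem_map] at hC
    obtain ⟨⟨k, -, rfl⟩, -⟩ := hC
    simp only [Finset.mem_filter, Finset.mem_univ, true_and] at hS hT
    rw [key]; omega
  · apply List.Pairwise.filter
    rw [List.pairwise_map]
    apply List.Pairwise.imp _ List.pairwise_lt_range
    intro a b hab S hS T hT
    simp only [Finset.mem_filter, Finset.mem_univ, true_and] at hS hT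
    rw [key, key]; omega

def dd (x y : X) (C : Finset (Finset X)) : ℤ := (count C x : ℤ) - count C y

def nnl : List ℤ → Prop
  | [] => True
  | d :: l => 0 < d ∨ (d = 0 ∧ nnl l)

def gtl : List ℤ → Prop
  | [] => False
  | d :: l => 0 < d ∨ (d = 0 ∧ gtl l)

theorem geLex_cons (a b : ℕ) (as bs : List ℕ) :
    GeLex (a :: as) (b :: bs) ↔ b < a ∨ (a = b ∧ GeLex as bs) := by
  unfold GeLex
  constructor
  · rintro (h | ⟨k, hk, h1, h2⟩)
    · simp only [List.cons.injEq] at h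
      exact Or.inr ⟨h.1, Or.inl h.2⟩
    · cases k with
      | zero => left; simpa using h2
      | succ k =>
        right
        refine ⟨by simpa using h1 0 (by omega), Or.inr ⟨k, by simpa using hk, ?_, by simpa using h2⟩⟩
        intro j hj
        simpa using h1 (j+1) (by omega)
  · rintro (h | ⟨rfl, h | ⟨k, hk, h1, h2⟩⟩)
    · right
      exact ⟨0, by simp, by simp, by simpa using h⟩
    · left; rw [h]
    · right
      refine ⟨k+1, by simpa using hk, ?_, by simpa using h2⟩
      intro j hj
      cases j with
      | zero => simp
      | succ j => simpa using h1 j (by omega)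

theorem geLex_theta (x y : X) (L : List (Finset (Finset X))) :
    GeLex (theta L x) (theta L y) ↔ nnl (L.map (dd x y)) := by
  induction L with
  | nil => simp [theta, GeLex, nnl]
  | cons C L ih =>
    simp only [theta, List.map_cons] at ih ⊢
    rw [geLex_cons, nnl, ih]
    unfold dd
    constructor
    · rintro (h | h)
      · left; omega
      · right; exact ⟨by omega, h.2⟩
    · rintro (h | h)
      · left; omega
      · right; exact ⟨by omega, h.2⟩

theorem not_nnl (x y : X) (L : List (Finset (Finset X))) :
    ¬ nnl (L.map (dd y x)) ↔ gtl (L.map (dd x y)) := by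
  induction L with
  | nil => simp [nnl, gtl]
  | cons C L ih =>
    simp only [List.map_cons, nnl, gtl, ← ih]
    unfold dd
    grind

theorem nnl_iff (l : List ℤ) : nnl l ↔ gtl l ∨ ∀ d ∈ l, d = 0 := by
  induction l with
  | nil => simp [nnl, gtl]
  | cons d l ih => simp only [nnl, gtl, ih, List.forall_mem_cons]; tauto

theorem gtl_append {l : List ℤ} (h : gtl l) (m : List ℤ) : gtl (l ++ m) := by
  induction l with
  | nil => exact h.elim
  | cons d l ih =>
    simp only [gtl, List.cons_append] at h ⊢
    exact h.imp id (fun h => ⟨h.1, ih h.2⟩)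

theorem gtl_drop_last {l : List ℤ} {w : ℤ} (h : gtl (l ++ [w])) (hs : (l ++ [w]).sum = 0) :
    gtl l := by
  induction l with
  | nil => simp [gtl] at *; omega
  | cons d l ih =>
    simp only [gtl, List.cons_append] at h ⊢
    refine h.imp id (fun h => ⟨h.1, ih h.2 ?_⟩)
    rw [List.cons_append, List.sum_cons, h.1] at hs
    simpa using hs

theorem RL_iff {r : Finset X → Finset X → Prop} {L : List (Finset (Finset X))}
    (h : IsClassList r L) (x y : X) : RL r x y ↔ nnl (L.map (dd x y)) := by
  rw [← geLex_theta]
  exact ⟨fun H => H L h, fun H L' h' => icl_unique h h' ▸ H⟩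

theorem strict_RL_iff {r : Finset X → Finset X → Prop} {L : List (Finset (Finset X))}
    (h : IsClassList r L) (x y : X) : StrictPart (RL r) x y ↔ gtl (L.map (dd x y)) := by
  unfold StrictPart
  rw [RL_iff h, RL_iff h, not_nnl, nnl_iff]
  tauto

theorem count_union {C D : Finset (Finset X)} (h : Disjoint C D) (x : X) :
    count (C ∪ D) x = count C x + count D x := by
  unfold count
  rw [Finset.filter_union, Finset.card_union_of_disjoint]
  exact Finset.disjoint_filter_filter h

theorem dd_union {C D : Finset (Finset X)} (h : Disjoint C D) (x y : X) :
    dd x y (C ∪ D) = dd x y C + dd x y D := by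
  unfold dd; rw [count_union h, count_union h]; push_cast; ring

theorem dd_empty (x y : X) : dd x y ∅ = 0 := by simp [dd, count]

theorem dd_univ (x y : X) : dd x y Finset.univ = 0 := by
  unfold dd count
  rw [sub_eq_zero, Nat.cast_inj]
  apply Finset.card_equiv (Equiv.finsetCongr (Equiv.swap x y))
  intro S
  simp only [Finset.mem_filter, Finset.mem_univ, true_and, Equiv.finsetCongr_apply,
    Finset.mem_map_equiv, Equiv.symm_swap, Equiv.swap_apply_right]

theorem pw_sum (x y : X) (L : List (Finset (Finset X))) (h : L.Pairwise Disjoint) :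
    (L.map (dd x y)).sum = dd x y (L.foldr (· ∪ ·) ∅) ∧
    ∀ S, S ∈ L.foldr (· ∪ ·) ∅ ↔ ∃ C ∈ L, S ∈ C := by
  induction L with
  | nil => simp [dd_empty]
  | cons C L ih =>
    rw [List.pairwise_cons] at h
    obtain ⟨i1, i2⟩ := ih h.2
    have hd : Disjoint C (L.foldr (· ∪ ·) ∅) := by
      rw [Finset.disjoint_left]
      intro S hS hS'
      obtain ⟨D, hD, hSD⟩ := (i2 S).1 hS'
      exact Finset.disjoint_left.1 (h.1 D hD) hS hSD
    constructor
    · simp only [List.map_cons, List.sum_cons, List.foldr_cons]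
      rw [dd_union hd, i1]
    · intro S
      simp only [List.foldr_cons, Finset.mem_union, i2, List.exists_mem_cons_iff]

theorem part_sum (x y : X) {L : List (Finset (Finset X))} (h : IsPart L) :
    (L.map (dd x y)).sum = 0 := by
  obtain ⟨h1, h2⟩ := pw_sum x y L h.2.2
  rw [h1, ← dd_univ x y]
  congr 1
  ext S
  simp [h2, h.2.1 S]

theorem nnl_filter (x y : X) (L : List (Finset (Finset X))) :
    nnl ((L.filter (fun C => decide (C ≠ ∅))).map (dd x y)) ↔ nnl (L.map (dd x y)) := by
  induction L with
  | nil => simp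
  | cons C L ih =>
    by_cases hC : C = ∅
    · subst hC
      simp only [List.map_cons, nnl, dd_empty]
      simpa using ih
    · rw [List.filter_cons_of_pos (by simpa using hC)]
      simp only [List.map_cons, nnl, ih]

theorem slide_map (x y : X) (L : List (Finset (Finset X))) (hL : IsPart L) (k₁ k₂ : ℕ)
    (h1 : k₁ < L.length) (h2 : k₂ < L.length) (Δ : Finset (Finset X))
    (hΔ : Δ ⊆ L.getD k₁ ∅) (hd : dd x y Δ = 0) :
    ((L.set k₁ ((L.getD k₁ ∅) \ Δ)).set k₂ ((L.getD k₂ ∅) ∪ Δ)).map (dd x y) =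
      L.map (dd x y) := by
  rw [List.getD_eq_getElem _ _ h1] at hΔ ⊢
  rw [List.getD_eq_getElem _ _ h2]
  apply List.ext_getElem (by simp)
  intro i hi hi'
  simp only [List.length_map] at hi'
  simp only [List.getElem_map, List.getElem_set]
  split_ifs with a b
  · subst a
    by_cases hk : k₁ = k₂
    · subst hk
      rw [Finset.union_eq_left.2 hΔ]
    · have hdis : Disjoint L[k₂] L[k₁] := by
        rw [Finset.disjoint_left]
        intro S hS hS'
        exact hk (hL.idx h1 h2 (by rwa [List.getD_eq_getElem _ _ h1])
          (by rwa [List.getD_eq_getElem _ _ h2]))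
      rw [dd_union (hdis.mono_right hΔ), hd, add_zero]
  · subst b
    have := dd_union (Finset.sdiff_disjoint (s := Δ) (t := L[k₁])) x y
    rw [Finset.sdiff_union_of_subset hΔ, hd, add_zero] at this
    exact this.symm
  · rfl

theorem back (R : (Finset X → Finset X → Prop) → X → X → Prop)
    (h : ∀ r, IsWeakOrder r → R r = RL r) : WIVIP R ∧ IWS R ∧ SSI R := by
  refine ⟨?_, ?_, ?_⟩
  · intro r C₁ C₂ hL x y hx hy
    rw [h r hL.weak, strict_RL_iff hL]
    simp only [List.map_cons, gtl]
    left
    unfold dd count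
    rw [sub_pos, Nat.cast_lt, Finset.filter_true_of_mem hx]
    apply Finset.card_lt_card
    obtain ⟨S, hS, hyS⟩ := hy
    rw [Finset.ssubset_iff_of_subset (Finset.filter_subset _ _)]
    exact ⟨S, hS, by simp [hyS]⟩
  · intro r r' L Γ W _ hr hr' x y
    rw [h r hr.weak, h r' hr'.weak, strict_RL_iff hr, strict_RL_iff hr']
    have hs := part_sum x y hr.part
    simp only [List.map_append, List.map_cons, List.map_nil] at hs ⊢
    intro hg
    exact gtl_append (gtl_drop_last hg hs) _
  · intro r r' L k₁ k₂ x y Δ hr h1 h2 hΔ hc hr'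
    rw [h r hr.weak, h r' hr'.weak]
    have key : ∀ a b : X, dd a b Δ = 0 → (RL r a b ↔ RL r' a b) := by
      intro a b hd
      rw [RL_iff hr, RL_iff hr', slide, nnl_filter, slide_map a b L hr.part k₁ k₂ h1 h2 Δ hΔ hd]
    intro a ha b hb
    apply key
    simp only [Set.mem_insert_iff, Set.mem_singleton_iff] at ha hb
    unfold dd
    rcases ha with rfl | rfl <;> rcases hb with rfl | rfl <;> omega

theorem AgreeOn.strict {p q : X → X → Prop} {x y : X} (h : AgreeOn p q x y) :
    (StrictPart p x y ↔ StrictPart q x y) := by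
  unfold StrictPart
  rw [h x (by simp) y (by simp), h y (by simp) x (by simp)]

theorem AgreeOn.symm' {p q : X → X → Prop} {x y : X} (h : AgreeOn p q x y) :
    AgreeOn p q y x := by
  intro a ha b hb
  exact h a (by simpa [or_comm] using ha) b (by simpa [or_comm] using hb)

theorem merge_part {C D : Finset (Finset X)} {L : List (Finset (Finset X))}
    (h : IsPart (C :: D :: L)) : IsPart ((D ∪ C) :: L) := by
  obtain ⟨h1, h2, h3⟩ := h
  simp only [List.forall_mem_cons, List.exists_mem_cons_iff, List.pairwise_cons] at h1 h2 h3
  refine ⟨?_, ?_, ?_⟩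
  · rw [List.forall_mem_cons]
    exact ⟨h1.2.1.mono Finset.subset_union_left, h1.2.2⟩
  · intro S
    rw [List.exists_mem_cons_iff, Finset.mem_union]
    have := h2 S
    tauto
  · rw [List.pairwise_cons]
    refine ⟨fun E hE => ?_, h3.2.2⟩
    rw [Finset.disjoint_union_left]
    exact ⟨h3.2.1 E hE, h3.1.2 E hE⟩

theorem merge_agree {R : (Finset X → Finset X → Prop) → X → X → Prop} (hS : SSI R)
    {r : Finset X → Finset X → Prop}
    {C D : Finset (Finset X)} {L : List (Finset (Finset X))} (h : IsClassList r (C :: D :: L))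
    {x y : X} (hd : dd x y C = 0) :
    AgreeOn (R r) (R (relOf ((D ∪ C) :: L))) x y := by
  refine hS r _ (C :: D :: L) 0 1 x y C h (by simp) (by simp) (by simp)
    (by unfold dd at hd; omega) ?_
  have hp := merge_part h.part
  have : slide (C :: D :: L) 0 1 C = (D ∪ C) :: L := by
    unfold slide
    simp only [List.getD_cons_zero, List.getD_cons_succ, Finset.sdiff_self, List.set_cons_zero,
      List.set_cons_succ]
    rw [List.filter_cons_of_neg (by simp)]
    rw [List.filter_eq_self]
    intro E hE
    simpa using (hp.1 E hE).ne_empty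
  rw [this]
  exact hp.icl

theorem two_part {C : Finset (Finset X)} (h : C.Nonempty) (h' : Cᶜ.Nonempty) :
    IsPart [C, Cᶜ] := by
  refine ⟨by simp [h, h'], ?_, ?_⟩
  · intro S; by_cases hS : S ∈ C <;> simp [hS]
  · simp [disjoint_compl_right]

theorem one_part : IsPart [(Finset.univ : Finset (Finset X))] :=
  ⟨by simp, by simp, by simp⟩

theorem part_one {C : Finset (Finset X)} (h : IsPart [C]) : C = Finset.univ := by
  ext S; simpa using h.2.1 S

theorem part_two {C D : Finset (Finset X)} (h : IsPart [C, D]) : D = Cᶜ := by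
  ext S
  have a := h.2.1 S
  have b := h.2.2
  simp only [List.mem_cons, List.not_mem_nil, or_false, exists_eq_or_imp, exists_eq_left,
    List.pairwise_cons, forall_eq_or_imp, forall_eq] at a b
  have c : S ∈ C → S ∉ D := fun h => Finset.disjoint_left.1 (by simpa using b) h
  rw [Finset.mem_compl]
  tauto

/-- no strict preference under the trivial order -/
theorem triv_not {R : (Finset X → Finset X → Prop) → X → X → Prop}
    (hW : WIVIP R) (hI : IWS R) (hS : SSI R) {x y : X} (hxy : x ≠ y) :
    ¬ StrictPart (R (relOf [Finset.univ])) x y := by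
  intro h
  have hne : (Finset.univ : Finset X) ≠ {y} := by
    intro e
    have : x ∈ ({y} : Finset X) := e ▸ Finset.mem_univ x
    exact hxy (by simpa using this)
  have hne2 : (Finset.univ : Finset X) ≠ ∅ := Finset.ne_empty_of_mem (Finset.mem_univ x)
  have hdU : dd x y {Finset.univ} = 0 := by
    unfold dd count
    rw [Finset.filter_singleton, Finset.filter_singleton]; simp
  let C : Finset (Finset X) := {Finset.univ}
  let W : Finset (Finset X) := ({Finset.univ, {y}} : Finset (Finset X))ᶜ
  have h3 : IsPart [C, {{y}}, W] := by
    refine ⟨?_, ?_, ?_⟩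
    · intro E hE
      simp only [List.mem_cons, List.not_mem_nil, or_false] at hE
      rcases hE with rfl | rfl | rfl
      · exact ⟨_, Finset.mem_singleton_self _⟩
      · exact ⟨_, Finset.mem_singleton_self _⟩
      · exact ⟨∅, by simp [W, hne2.symm, (Finset.singleton_ne_empty y).symm]⟩
    · intro S
      by_cases a : S = Finset.univ
      · exact ⟨C, by simp, by simp [C, a]⟩
      · by_cases b : S = {y}
        · exact ⟨{{y}}, by simp, by simp [b]⟩
        · exact ⟨W, by simp, by simp [W, a, b]⟩
    · simp [C, W, hne]
  have h2 : IsPart [C, Cᶜ] := two_part ⟨_, Finset.mem_singleton_self _⟩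
    ⟨∅, by simp [C, hne2.symm]⟩
  have e2 := (merge_agree hS h2.icl (x := x) (y := y) hdU).strict
  rw [Finset.union_comm, Finset.union_compl] at e2
  have s3 := hI _ _ [C] [{{y}}, W] Cᶜ (by simp) h2.icl h3.icl x y (e2.2 h)
  have s4 := (merge_agree hS h3.icl (x := x) (y := y) hdU).strict.1 s3
  have := hW _ _ _ (merge_part h3).icl y x (by simp [C]) ⟨{y}, by simp, by simpa using hxy⟩
  exact this.2 s4.1

theorem two_strict {R : (Finset X → Finset X → Prop) → X → X → Prop}
    (hW : WIVIP R) (hS : SSI R) {x y : X} {C : Finset (Finset X)}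
    (hp : IsPart [C, Cᶜ]) (hd : 0 < dd x y C) :
    StrictPart (R (relOf [C, Cᶜ])) x y := by
  let A := C.filter (fun S => x ∈ S ∧ y ∉ S)
  let B := C.filter (fun S => x ∉ S ∧ y ∈ S)
  let N := C.filter (fun S => x ∈ S ∧ y ∈ S)
  have cx : count C x = A.card + N.card := by
    unfold count
    rw [← Finset.card_union_of_disjoint]
    · congr 1; ext S; simp only [A, N, Finset.mem_union, Finset.mem_filter]; tauto
    · rw [Finset.disjoint_left]; intro S; simp only [A, N, Finset.mem_filter]; tauto
  have cy : count C y = B.card + N.card := by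
    unfold count
    rw [← Finset.card_union_of_disjoint]
    · congr 1; ext S; simp only [B, N, Finset.mem_union, Finset.mem_filter]; tauto
    · rw [Finset.disjoint_left]; intro S; simp only [B, N, Finset.mem_filter]; tauto
  have hBA : B.card < A.card := by unfold dd at hd; omega
  obtain ⟨E, hEA, hE⟩ := Finset.exists_subset_card_eq (show A.card - B.card ≤ A.card by omega)
  have hEC : E ⊆ C := hEA.trans (Finset.filter_subset _ _)
  have hEx : ∀ S ∈ E, x ∈ S ∧ y ∉ S := fun S hS => (Finset.mem_filter.1 (hEA hS)).2
  have hEne : E.Nonempty := Finset.card_pos.1 (by omega)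
  have cEx : count E x = E.card := by
    unfold count; rw [Finset.filter_true_of_mem (fun S hS => (hEx S hS).1)]
  have cEy : count E y = 0 := by
    unfold count; rw [Finset.filter_false_of_mem (fun S hS => (hEx S hS).2)]; rfl
  have ux := count_union (Finset.sdiff_disjoint (s := E) (t := C)) x
  have uy := count_union (Finset.sdiff_disjoint (s := E) (t := C)) y
  rw [Finset.sdiff_union_of_subset hEC] at ux uy
  have hEc : Eᶜ.Nonempty := (hp.1 Cᶜ (by simp)).mono (Finset.compl_subset_compl.2 hEC)
  have hp2 := two_part hEne hEc
  have hsl : slide [C, Cᶜ] 0 1 (C \ E) = [E, Eᶜ] := by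
    unfold slide
    simp only [List.getD_cons_zero, List.getD_cons_succ, List.set_cons_zero,
      List.set_cons_succ]
    have e1 : C \ (C \ E) = E := by
      exact Finset.sdiff_sdiff_eq_self hEC
    have e2 : Cᶜ ∪ C \ E = Eᶜ := by
      ext S
      have := @hEC S
      simp only [Finset.mem_union, Finset.mem_compl, Finset.mem_sdiff]
      tauto
    rw [e1, e2, List.filter_eq_self]
    intro F hF
    simpa using (hp2.1 F hF).ne_empty
  have := hS _ (relOf [E, Eᶜ]) [C, Cᶜ] 0 1 x y (C \ E) hp.icl (by simp) (by simp)
    (by simp) (by omega) (by rw [hsl]; exact hp2.icl)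
  rw [this.strict]
  obtain ⟨S, hSE⟩ := hEne
  exact hW _ _ _ hp2.icl x y (fun S hS => (hEx S hS).1) ⟨S, hSE, (hEx S hSE).2⟩

theorem fwd_aux {R : (Finset X → Finset X → Prop) → X → X → Prop} (hR : IsSRS R)
    (hW : WIVIP R) (hI : IWS R) (hS : SSI R) {x y : X} (hxy : x ≠ y) :
    ∀ (n : ℕ) (L : List (Finset (Finset X))) (r : Finset X → Finset X → Prop),
      L.length = n → IsClassList r L →
      (gtl (L.map (dd x y)) → StrictPart (R r) x y) ∧
      ((∀ d ∈ L.map (dd x y), d = 0) → R r x y) := by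
  intro n
  induction n with
  | zero =>
    intro L r hn h
    obtain rfl := List.length_eq_zero_iff.1 hn
    obtain ⟨C, hC, -⟩ := h.part.2.1 ∅
    simp at hC
  | succ n ih =>
    intro L r hn h
    match L, hn, h with
    | [C], _, h =>
      obtain rfl := part_one h.part
      refine ⟨fun hg => ?_, fun _ => ?_⟩
      · simp [gtl, dd_univ] at hg
      · have hr : r = relOf [Finset.univ] := by
          have h' := (one_part (X := X)).icl
          ext S T
          rw [h.2.2 0 0 (by simp) (by simp) S (by simp) T (by simp),
            h'.2.2 0 0 (by simp) (by simp) S (by simp) T (by simp)]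
        have := triv_not hW hI hS hxy.symm
        rw [← hr] at this
        by_contra hn
        exact this ⟨((hR r h.weak).2.1 x y).resolve_left hn, hn⟩
    | C :: D :: L, hn, h =>
      by_cases hd : dd x y C = 0
      · have hag := merge_agree hS h hd
        have hp := merge_part h.part
        have := ih ((D ∪ C) :: L) _ (by simpa using hn) hp.icl
        rw [← hag.strict, ← hag x (by simp) y (by simp)] at this
        have hdis : Disjoint D C := by
          have := h.part.2.2
          simp only [List.pairwise_cons, List.forall_mem_cons] at this
          exact this.1.1.symm
        simp only [List.map_cons, dd_union hdis, hd, add_zero] at this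
        simp only [List.map_cons, hd, gtl, List.forall_mem_cons] at this ⊢
        refine ⟨fun hg => this.1 (by simpa using hg), fun h0 => this.2 (by simpa using h0)⟩
      · refine ⟨fun hg => ?_, fun h0 => absurd (h0 (dd x y C) (by simp)) hd⟩
        have hpos : 0 < dd x y C := by
          simp only [List.map_cons, gtl] at hg; tauto
        have h1 : C.Nonempty := h.1 C (by simp)
        have h2 : Cᶜ.Nonempty := by
          obtain ⟨S, hS'⟩ := h.1 D (by simp)
          refine ⟨S, ?_⟩
          have := h.part.2.2
          simp only [List.pairwise_cons, List.forall_mem_cons] at this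
          rw [Finset.mem_compl]
          exact fun hc => Finset.disjoint_left.1 this.1.1 hc hS'
        have hp := two_part h1 h2
        exact hI _ _ [C] (D :: L) Cᶜ (by simp) hp.icl h x y (two_strict hW hS hp hpos)

theorem fwd {R : (Finset X → Finset X → Prop) → X → X → Prop} (hR : IsSRS R)
    (hW : WIVIP R) (hI : IWS R) (hS : SSI R) (r : Finset X → Finset X → Prop)
    (hr : IsWeakOrder r) : R r = RL r := by
  obtain ⟨L, hL⟩ := icl_exists hr
  ext x y
  rw [RL_iff hL]
  by_cases hxy : x = y
  · subst hxy
    refine ⟨fun _ => ?_, fun _ => (hR r hr).1 x⟩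
    rw [nnl_iff]; right
    simp [dd]
  · have h1 := fwd_aux hR hW hI hS hxy _ L r rfl hL
    have h2 := fwd_aux hR hW hI hS (Ne.symm hxy) _ L r rfl hL
    constructor
    · intro h
      by_contra hn
      rw [not_nnl] at hn
      exact (h2.1 hn).2 h
    · intro h
      rw [nnl_iff] at h
      exact h.elim (fun h => (h1.1 h).1) h1.2

end Helpers

/-- Theorem (characterization of the lexicographic excellence solution, `|X| ≥ 2`):
an SRS satisfies WIVIP, IWS and SSI iff it is `R^L`. -/
theorem lexcel_characterization (hX : 2 ≤ Fintype.card X)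
    (R : (Finset X → Finset X → Prop) → X → X → Prop) (hR : IsSRS R) :
    (WIVIP R ∧ IWS R ∧ SSI R) ↔ (∀ r, IsWeakOrder r → R r = RL r) := by
  exact ⟨fun h r hr => fwd hR h.1 h.2.1 h.2.2 r hr, back R⟩

end SocialRanking
end

section
/- An SRS R : ℛ(𝔛) → ℛ(X) satisfies slide independence (SI) if and only if it satisfies Top slide independence (Top-SI), i.e., the condition of SI restricted to slides out of the best equivalence class (k_1 = 1). -/
/-!
Social ranking solutions (SRSs).  The set of individuals is a finite type `X`;
coalitions are elements of `Finset X` (so the domain of a power relation is the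
whole power set `𝔛 = 2^X`).  A weak order `≿ ∈ ℛ(𝔛)` is encoded as a relation
`r : Finset X → Finset X → Prop` together with (when needed) its list of
equivalence classes `L = [Σ₁, …, Σ_l]` in strictly decreasing order
(`IsClassList r L`).
-/

namespace SocialRanking

variable {X : Type*} [Fintype X] [DecidableEq X]

theorem slide_eq (r : Finset X → Finset X → Prop) (L : List (Finset (Finset X)))
    (hL : IsClassList r L) (k₁ k₂ : ℕ) (Δ : Finset (Finset X))
    (h₁ : k₁ < L.length) (h₂ : k₂ < L.length) (hΔ : Δ ⊂ L.getD k₁ ∅) :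
    slide L k₁ k₂ Δ = (L.set k₁ ((L.getD k₁ ∅) \ Δ)).set k₂ ((L.getD k₂ ∅) ∪ Δ) := by
  unfold slide
  rw [List.filter_eq_self]
  intro C hC
  have hne : C.Nonempty := by
    rcases List.mem_or_eq_of_mem_set hC with h | h
    · rcases List.mem_or_eq_of_mem_set h with h | h
      · exact hL.1 C h
      · rw [h, Finset.sdiff_nonempty]
        exact hΔ.2
    · rw [h]
      refine Finset.Nonempty.inl (hL.1 _ ?_)
      rw [List.getD_eq_getElem _ _ h₂]
      exact List.getElem_mem h₂
  simpa using hne.ne_empty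

theorem getD_set' (L : List (Finset (Finset X))) (k i : ℕ) (C : Finset (Finset X))
    (hk : k < L.length) : (L.set k C).getD i ∅ = if i = k then C else L.getD i ∅ := by
  simp only [List.getD_eq_getElem?_getD, List.getElem?_set]
  by_cases h : i = k
  · subst h; simp [hk]
  · rw [if_neg (Ne.symm h), if_neg h]

theorem slide_facts (r : Finset X → Finset X → Prop) (L : List (Finset (Finset X)))
    (hL : IsClassList r L) (k₁ k₂ : ℕ) (Δ : Finset (Finset X))
    (h₁ : k₁ < L.length) (h₂ : k₂ < L.length) (hΔ : Δ ⊂ L.getD k₁ ∅) :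
    (slide L k₁ k₂ Δ).length = L.length ∧
    ∀ i, (slide L k₁ k₂ Δ).getD i ∅ = if i = k₂ then L.getD k₂ ∅ ∪ Δ else
      if i = k₁ then L.getD k₁ ∅ \ Δ else L.getD i ∅ := by
  rw [slide_eq r L hL k₁ k₂ Δ h₁ h₂ hΔ]
  refine ⟨by simp, fun i => ?_⟩
  rw [getD_set' _ _ _ _ (by simpa using h₂), getD_set' _ _ _ _ h₁]

theorem exists_rel (L : List (Finset (Finset X)))
    (h1 : ∀ C ∈ L, C.Nonempty)
    (h2 : ∀ S : Finset X, ∃! i : ℕ, i < L.length ∧ S ∈ L.getD i ∅) :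
    ∃ r, IsClassList r L := by
  choose f hf hu using h2
  refine ⟨fun S T => f S ≤ f T, h1, fun S => ⟨f S, hf S, hu S⟩, ?_⟩
  intro i j hi hj S hS T hT
  rw [hu S i ⟨hi, hS⟩, hu T j ⟨hj, hT⟩]

theorem idx_unique {r : Finset X → Finset X → Prop} {L : List (Finset (Finset X))}
    (hL : IsClassList r L) {i j : ℕ} {S : Finset X} (hi : i < L.length) (hj : j < L.length)
    (hS : S ∈ L.getD i ∅) (hS' : S ∈ L.getD j ∅) : i = j :=
  (hL.2.1 S).unique ⟨hi, hS⟩ ⟨hj, hS'⟩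

theorem exists_slide_rel (r : Finset X → Finset X → Prop) (L : List (Finset (Finset X)))
    (hL : IsClassList r L) (k₁ k₂ : ℕ) (Δ : Finset (Finset X)) (hk : k₁ ≠ k₂)
    (h₁ : k₁ < L.length) (h₂ : k₂ < L.length) (hΔ : Δ ⊂ L.getD k₁ ∅) :
    ∃ r', IsClassList r' (slide L k₁ k₂ Δ) := by
  obtain ⟨hlen, hget⟩ := slide_facts r L hL k₁ k₂ Δ h₁ h₂ hΔ
  apply exists_rel
  · intro C hC
    have := (List.mem_filter.1 hC).2
    exact Finset.nonempty_iff_ne_empty.2 (by simpa using this)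
  · intro S
    rw [hlen]
    obtain ⟨i, ⟨hi, hS⟩, hu⟩ := hL.2.1 S
    simp only [hget]
    by_cases hSD : S ∈ Δ
    · have hik : k₁ = i := hu _ ⟨h₁, hΔ.1 hSD⟩
      refine ⟨k₂, ⟨h₂, by simp [hSD]⟩, ?_⟩
      rintro j ⟨hj, hSj⟩
      by_contra hne
      rw [if_neg hne] at hSj
      split_ifs at hSj with h
      · simp [hSD] at hSj
      · exact h ((hu j ⟨hj, hSj⟩).trans hik.symm)
    · refine ⟨i, ⟨hi, ?_⟩, ?_⟩
      · split_ifs with h h'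
        · subst h; exact Finset.mem_union_left _ hS
        · subst h'; exact Finset.mem_sdiff.2 ⟨hS, hSD⟩
        · exact hS
      · rintro j ⟨hj, hSj⟩
        apply hu j ⟨hj, ?_⟩
        split_ifs at hSj with h h'
        · subst h; simpa [hSD] using hSj
        · subst h'; exact (Finset.mem_sdiff.1 hSj).1
        · exact hSj

theorem ext_getD' {L M : List (Finset (Finset X))} (hlen : L.length = M.length)
    (h : ∀ i, L.getD i ∅ = M.getD i ∅) : L = M := by
  apply List.ext_getElem hlen
  intro i hi hi'
  have := h i
  rwa [List.getD_eq_getElem _ _ hi, List.getD_eq_getElem _ _ hi'] at this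

theorem top_facts (r r' : Finset X → Finset X → Prop) (L : List (Finset (Finset X)))
    (hL : IsClassList r L) (k₁ k₂ : ℕ) (Δ : Finset (Finset X)) (hk₁ : k₁ ≠ 0) (hk₂ : k₂ ≠ 0)
    (h₁ : k₁ < L.length) (h₂ : k₂ < L.length) (hΔ : Δ ⊂ L.getD k₁ ∅)
    (hr' : IsClassList r' (slide L k₁ 0 Δ)) :
    Δ ⊂ (slide L k₁ 0 Δ).getD 0 ∅ ∧
    slide (slide L k₁ 0 Δ) 0 k₂ Δ = slide L k₁ k₂ Δ := by
  have h0 : 0 < L.length := by omega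
  obtain ⟨hlen, hget⟩ := slide_facts r L hL k₁ 0 Δ h₁ h0 hΔ
  have hdisj : Disjoint (L.getD 0 ∅) Δ := by
    rw [Finset.disjoint_left]
    intro S hS hS'
    exact hk₁ (idx_unique hL h₁ h0 (hΔ.1 hS') hS)
  have hss : Δ ⊂ (slide L k₁ 0 Δ).getD 0 ∅ := by
    rw [hget, if_pos rfl]
    refine ⟨Finset.subset_union_right, fun h => ?_⟩
    obtain ⟨S, hS⟩ := hL.1 (L.getD 0 ∅)
      (by rw [List.getD_eq_getElem _ _ h0]; exact List.getElem_mem h0)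
    exact Finset.disjoint_left.1 hdisj hS (h (Finset.mem_union_left _ hS))
  refine ⟨hss, ?_⟩
  obtain ⟨hlen2, hget2⟩ := slide_facts r' _ hr' 0 k₂ Δ (by omega) (by omega) hss
  obtain ⟨hlen3, hget3⟩ := slide_facts r L hL k₁ k₂ Δ h₁ h₂ hΔ
  apply ext_getD' (by omega)
  intro i
  rw [hget2, hget3]
  simp only [hget]
  by_cases hi : i = k₂
  · subst hi
    simp only [if_true, if_neg hk₂]
    split_ifs with h
    · subst h; exact Finset.sdiff_union_of_subset hΔ.1 |>.trans
        (Finset.union_eq_left.2 hΔ.1).symm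
    · rfl
  · simp only [if_neg hi]
    by_cases hi0 : i = 0
    · subst hi0
      simp only [if_true, if_neg (Ne.symm hk₁)]
      rw [Finset.union_sdiff_right, Finset.sdiff_eq_self_of_disjoint hdisj]
    · simp only [if_neg hi0]

theorem slide_self (r : Finset X → Finset X → Prop) (L : List (Finset (Finset X)))
    (hL : IsClassList r L) (k : ℕ) (Δ : Finset (Finset X))
    (h₁ : k < L.length) (hΔ : Δ ⊂ L.getD k ∅) : slide L k k Δ = L := by
  obtain ⟨hlen, hget⟩ := slide_facts r L hL k k Δ h₁ h₁ hΔ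
  apply ext_getD' hlen
  intro i
  rw [hget]
  split_ifs with h
  · subst h; exact Finset.union_eq_left.2 hΔ.1
  · rfl

/-- An SRS satisfies slide independence iff it satisfies Top slide independence. -/
theorem si_iff_topsi [Nonempty X]
    (R : (Finset X → Finset X → Prop) → X → X → Prop) (hR : IsSRS R) :
    SI R ↔ TopSI R := by
  constructor
  · intro h r r' L k₂ x y Δ hL h0 h2 hΔ hc hr'
    exact h r r' L 0 k₂ x y Δ hL h0 h2 hΔ hc hr'
  · intro h r r' L k₁ k₂ x y Δ hL h1 h2 hΔ hc hr'
    by_cases hk₁ : k₁ = 0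
    · subst hk₁
      exact h r r' L k₂ x y Δ hL h1 h2 hΔ hc hr'
    have h0 : 0 < L.length := by omega
    have key : ∀ r'', IsClassList r'' (slide L k₁ 0 Δ) → AgreeOn (R r'') (R r) x y := by
      intro r'' hr''
      obtain ⟨hs, he⟩ := top_facts r r'' L hL k₁ k₁ Δ hk₁ hk₁ h1 h1 hΔ hr''
      have hlen := (slide_facts r L hL k₁ 0 Δ h1 h0 hΔ).1
      refine h r'' r _ k₁ x y Δ hr'' (by omega) (by omega) hs hc ?_
      rw [he, slide_self r L hL k₁ Δ h1 hΔ]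
      exact hL
    by_cases hk₂ : k₂ = 0
    · subst hk₂
      exact fun a ha b hb => (key r' hr' a ha b hb).symm
    · obtain ⟨r'', hr''⟩ := exists_slide_rel r L hL k₁ 0 Δ hk₁ h1 h0 hΔ
      obtain ⟨hs, he⟩ := top_facts r r'' L hL k₁ k₂ Δ hk₁ hk₂ h1 h2 hΔ hr''
      have hlen := (slide_facts r L hL k₁ 0 Δ h1 h0 hΔ).1
      have := h r'' r' _ k₂ x y Δ hr'' (by omega) (by omega) hs hc (by rw [he]; exact hr')
      exact fun a ha b hb => (key r'' hr'' a ha b hb).symm.trans (this a ha b hb)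

end SocialRanking
end

section
/- If |X| ≥ 2, the lexicographic excellence solution R^L does not satisfy tops-only (TO): there exist ≿, ≿' ∈ ℛ(𝔛) with the same best equivalence class such that R^L_≿ ≠ R^L_{≿'}. -/
/-!
Social ranking solutions (SRSs).  The set of individuals is a finite type `X`;
coalitions are elements of `Finset X` (so the domain of a power relation is the
whole power set `𝔛 = 2^X`).  A weak order `≿ ∈ ℛ(𝔛)` is encoded as a relation
`r : Finset X → Finset X → Prop` together with (when needed) its list of
equivalence classes `L = [Σ₁, …, Σ_l]` in strictly decreasing order
(`IsClassList r L`).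
-/

namespace SocialRanking

variable {X : Type*} [Fintype X] [DecidableEq X]

theorem isClassList_of_rank (rank : Finset X → ℕ) (L : List (Finset (Finset X)))
    (hne : ∀ C ∈ L, C.Nonempty)
    (h : ∀ S i, (i < L.length ∧ S ∈ L.getD i ∅) ↔ rank S = i) :
    IsClassList (fun S T => rank S ≤ rank T) L := by
  refine ⟨hne, fun S => ⟨rank S, (h S _).2 rfl, fun i hi => ((h S i).1 hi).symm⟩, ?_⟩
  intro i j hi hj S hS T hT
  have h1 := (h S i).1 ⟨hi, hS⟩
  have h2 := (h T j).1 ⟨hj, hT⟩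
  simp only [h1, h2]

theorem class_closed {r : Finset X → Finset X → Prop} {L : List (Finset (Finset X))}
    (h : IsClassList r L) {C : Finset (Finset X)} (hC : C ∈ L) {S T : Finset X}
    (hS : S ∈ C) (h1 : r S T) (h2 : r T S) : T ∈ C := by
  obtain ⟨i, hi, rfl⟩ := List.getElem_of_mem hC
  obtain ⟨j, ⟨hj, hT⟩, -⟩ := h.2.1 T
  have hS' : S ∈ L.getD i ∅ := by simpa [hi] using hS
  have e1 := (h.2.2 i j hi hj S hS' T hT).1 h1
  have e2 := (h.2.2 j i hj hi T hT S hS').1 h2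
  obtain rfl : i = j := le_antisymm e1 e2
  simpa [hi] using hT

/-- If `|X| ≥ 2`, the lexicographic excellence solution does not satisfy tops-only. -/
theorem lexcel_not_to (hX : 2 ≤ Fintype.card X) :
    ¬ TO (X := X) RL := by
  obtain ⟨x, y, hxy⟩ := Fintype.exists_pair_of_one_lt_card (α := X) (by omega)
  intro hTO
  have hsy : ({y} : Finset X) ≠ ∅ := Finset.singleton_ne_empty y
  have hsx : ({x} : Finset X) ≠ ∅ := Finset.singleton_ne_empty x
  have hsxy : ({x} : Finset X) ≠ {y} := fun h => hxy (Finset.singleton_injective h)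
  let rk : Finset X → ℕ := fun S => if S = ∅ then 0 else if S = {y} then 1 else 2
  let rk' : Finset X → ℕ := fun S => if S = ∅ then 0 else 1
  have h1 : IsClassList (fun S T => rk S ≤ rk T)
      ({∅} :: [{{y}}, Finset.univ.filter (fun S => S ≠ ∅ ∧ S ≠ {y})]) := by
    apply isClassList_of_rank
    · intro C hC
      simp only [List.mem_cons, List.not_mem_nil, or_false] at hC
      rcases hC with rfl | rfl | rfl
      · simp
      · simp
      · exact ⟨{x}, by simp [hsxy]⟩
    · intro S i
      rcases i with _ | _ | _ | i <;> simp [rk] <;> split_ifs <;> simp_all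
  have h2 : IsClassList (fun S T => rk' S ≤ rk' T)
      ({∅} :: [Finset.univ.filter (fun S => S ≠ ∅)]) := by
    apply isClassList_of_rank
    · intro C hC
      simp only [List.mem_cons, List.not_mem_nil, or_false] at hC
      rcases hC with rfl | rfl
      · simp
      · exact ⟨{x}, by simp⟩
    · intro S i
      rcases i with _ | _ | i <;> simp [rk']
      split_ifs <;> simp
  have hR := hTO _ _ _ _ _ h1 h2
  have ht : RL (fun S T => rk' S ≤ rk' T) x y := by
    intro L hL
    left
    unfold theta
    apply List.map_congr_left
    intro C hC
    have hcl : ∀ S ∈ C, S.image (Equiv.swap x y) ∈ C := by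
      intro S hS
      have : rk' (S.image (Equiv.swap x y)) = rk' S := by simp [rk']
      exact class_closed hL hC hS this.ge this.le
    have hinj : Function.Injective (fun S : Finset X => S.image (Equiv.swap x y)) :=
      Finset.image_injective (Equiv.swap x y).injective
    unfold count
    apply le_antisymm
    · apply Finset.card_le_card_of_injOn (fun S => S.image (Equiv.swap x y)) _ hinj.injOn
      intro S hS
      simp only [Finset.coe_filter, Set.mem_setOf_eq] at hS ⊢
      exact ⟨hcl S hS.1, Finset.mem_image.2 ⟨x, hS.2, by simp⟩⟩
    · apply Finset.card_le_card_of_injOn (fun S => S.image (Equiv.swap x y)) _ hinj.injOn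
      intro S hS
      simp only [Finset.coe_filter, Set.mem_setOf_eq] at hS ⊢
      exact ⟨hcl S hS.1, Finset.mem_image.2 ⟨y, hS.2, by simp⟩⟩
  rw [← hR] at ht
  have c0 : ∀ z : X, count {∅} z = 0 := by intro z; simp [count, Finset.filter_singleton]
  have cx : count {{y}} x = 0 := by simp [count, Finset.filter_singleton, hxy]
  have cy : count {{y}} y = 1 := by simp [count, Finset.filter_singleton]
  rcases ht _ h1 with h | ⟨k, hk, he, hlt⟩
  · simp [theta, cx, cy] at h
  · rcases k with _ | _ | k
    · simp [theta, c0] at hlt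
    · simp [theta, cx, cy] at hlt
    · have := he 1 (by omega)
      simp [theta, cx, cy] at this

end SocialRanking
end
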